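/- Let A : ℝ → ℝ be continuously differentiable on [0,∞) with A(0) = 0, A(r) > 0 for all r > 0, and A'(r) ≥ 0 for all r ≥ 0. Let F : ℝ × ℝ → ℝ be twice continuously differentiable on the closed quadrant [0,∞) × [0,∞), antisymmetric in the sense that F(r,s) = −F(s,r) for all r,s ≥ 0, and suppose that on the open quadrant F satisfies the partial differential equation ∂²F/∂r²(r,s) + (A'(r)/A(r))·∂F/∂r(r,s) = ∂²F/∂s²(r,s) + (A'(s)/A(s))·∂F/∂s(r,s) for all r > 0, s > 0. Then F(r,s) = 0 for all r,s ≥ 0. -/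

import Mathlib

/-!
The equation reads `F_rr - A(s)⁻¹ (A(s) F_s)_s = -(A'(r)/A(r)) F_r`, a damped wave equation in the
time variable `r`. On the triangle `0 ≤ s ≤ r` put `e = (F_r² + F_s²) A(s)` (energy density) and
`p = 2 A(s) F_s F_r` (flux); then `e_r - p_s = -2 (A'(r)/A(r)) A(s) F_r² ≤ 0`. The flux through
`s = 0` vanishes because `A 0 = 0`. Through the diagonal the flux is `e + p = A (F_r + F_s)²`, which
vanishes because antisymmetry forces `F = 0` there. So the energy `∫₀^X e(X, s) ds` is at
most `0`, hence `F_r = F_s = 0` inside the triangle, and `F` is the constant `0` there.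

The triangle is parametrised by the rectangle `(x, t) ∈ [0, X] × [0, 1]` through
`(r, s) = (x, x t)`. The divergence theorem is applied there to the pulled-back field
`(x e, -(t e + p))`, whose divergence is `x (e_r - p_s)`; this is `energy_nonpos`.
-/

open Set MeasureTheory Filter Topology

/-- A `C²` function on the closed quadrant has first partial derivatives `P`, `S` that extend
continuously to the boundary, and second partial derivatives `a`, `b`, `c` in the open quadrant.
That `b` occurs in both derivatives is the symmetry of the second derivative. -/
lemma exists_partials {F : ℝ × ℝ → ℝ} (hF : ContDiffOn ℝ 2 F (Ici 0 ×ˢ Ici 0)) :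
    ∃ P S a b c : ℝ × ℝ → ℝ, ContinuousOn P (Ici 0 ×ˢ Ici 0) ∧ ContinuousOn S (Ici 0 ×ˢ Ici 0) ∧
      ∀ r s : ℝ, 0 < r → 0 < s →
        HasFDerivAt F (P (r, s) • ContinuousLinearMap.fst ℝ ℝ ℝ
          + S (r, s) • ContinuousLinearMap.snd ℝ ℝ ℝ) (r, s) ∧
        HasFDerivAt P (a (r, s) • ContinuousLinearMap.fst ℝ ℝ ℝ
          + b (r, s) • ContinuousLinearMap.snd ℝ ℝ ℝ) (r, s) ∧
        HasFDerivAt S (b (r, s) • ContinuousLinearMap.fst ℝ ℝ ℝ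
          + c (r, s) • ContinuousLinearMap.snd ℝ ℝ ℝ) (r, s) := by
  set Q : Set (ℝ × ℝ) := Ici 0 ×ˢ Ici 0
  have hQ : UniqueDiffOn ℝ Q := (uniqueDiffOn_Ici 0).prod (uniqueDiffOn_Ici 0)
  have hcont := hF.continuousOn_fderivWithin hQ (by norm_num)
  refine ⟨fun q => fderivWithin ℝ F Q q (1, 0), fun q => fderivWithin ℝ F Q q (0, 1),
    fun q => fderiv ℝ (fderiv ℝ F) q (1, 0) (1, 0), fun q => fderiv ℝ (fderiv ℝ F) q (0, 1) (1, 0),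
    fun q => fderiv ℝ (fderiv ℝ F) q (0, 1) (0, 1), hcont.clm_apply continuousOn_const,
    hcont.clm_apply continuousOn_const, fun r s hr hs => ?_⟩
  have hnhds : ∀ q : ℝ × ℝ, 0 < q.1 → 0 < q.2 → Q ∈ 𝓝 q := fun q h1 h2 =>
    prod_mem_nhds (Ici_mem_nhds h1) (Ici_mem_nhds h2)
  have hev : ∀ᶠ q in 𝓝 (r, s), fderivWithin ℝ F Q q = fderiv ℝ F q := by
    have : Ioi (0 : ℝ) ×ˢ Ioi (0 : ℝ) ∈ 𝓝 (r, s) :=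
      prod_mem_nhds (Ioi_mem_nhds hr) (Ioi_mem_nhds hs)
    filter_upwards [this] with q hq
    exact fderivWithin_of_mem_nhds (hnhds q hq.1 hq.2)
  have hat : ContDiffAt ℝ 2 F (r, s) := hF.contDiffAt (hnhds (r, s) hr hs)
  have h1 : HasFDerivAt F (fderiv ℝ F (r, s)) (r, s) :=
    (hat.differentiableAt (by norm_num)).hasFDerivAt
  have h2 : HasFDerivAt (fderiv ℝ F) (fderiv ℝ (fderiv ℝ F) (r, s)) (r, s) :=
    ((hat.fderiv_right (m := 1) (by norm_num)).differentiableAt (by norm_num)).hasFDerivAt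
  have hsymm : IsSymmSndFDerivAt ℝ F (r, s) := hat.isSymmSndFDerivAt (by simp)
  have h3 : ∀ v : ℝ × ℝ, HasFDerivAt (fun q => fderivWithin ℝ F Q q v)
      ((fderiv ℝ (fderiv ℝ F) (r, s)).flip v) (r, s) := fun v => by
    have := h2.clm_apply (hasFDerivAt_const v (r, s))
    refine (this.congr_of_eventuallyEq (hev.mono fun q hq => by simp [hq])).congr_fderiv ?_
    ext <;> simp
  refine ⟨h1.congr_fderiv ?_, (h3 (1, 0)).congr_fderiv ?_, (h3 (0, 1)).congr_fderiv ?_⟩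
  · ext <;> simp [hev.self_of_nhds]
  · ext <;> simp
  · ext <;> simp [hsymm.eq (1, 0) (0, 1)]

lemma hasDerivAt_comp_pair {H : ℝ × ℝ → ℝ} {u v : ℝ → ℝ} {α β u' v' z : ℝ}
    (hu : HasDerivAt u u' z) (hv : HasDerivAt v v' z)
    (h : HasFDerivAt H (α • ContinuousLinearMap.fst ℝ ℝ ℝ + β • ContinuousLinearMap.snd ℝ ℝ ℝ)
      (u z, v z)) : HasDerivAt (fun z => H (u z, v z)) (α * u' + β * v') z :=
  HasFDerivAt.comp_hasDerivAt (f := fun z => (u z, v z)) z h (hu.prodMk hv)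

lemma hasDerivAt_triangle_fst {H : ℝ × ℝ → ℝ} {α β x t : ℝ}
    (h : HasFDerivAt H (α • ContinuousLinearMap.fst ℝ ℝ ℝ + β • ContinuousLinearMap.snd ℝ ℝ ℝ)
      (x, x * t)) : HasDerivAt (fun x => H (x, x * t)) (α + β * t) x :=
  (hasDerivAt_comp_pair (hasDerivAt_id' x) ((hasDerivAt_id' x).mul_const t) h).congr_deriv
    (by simp)

lemma hasDerivAt_triangle_snd {H : ℝ × ℝ → ℝ} {α β x t : ℝ}
    (h : HasFDerivAt H (α • ContinuousLinearMap.fst ℝ ℝ ℝ + β • ContinuousLinearMap.snd ℝ ℝ ℝ)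
      (x, x * t)) : HasDerivAt (fun t => H (x, x * t)) (β * x) t :=
  (hasDerivAt_comp_pair (hasDerivAt_const t x) ((hasDerivAt_id' t).const_mul x) h).congr_deriv
    (by simp)

lemma differentiableAt_triangle {H : ℝ × ℝ → ℝ} {L : ℝ × ℝ →L[ℝ] ℝ} {q : ℝ × ℝ}
    (h : HasFDerivAt H L (q.1, q.1 * q.2)) :
    DifferentiableAt ℝ (fun q : ℝ × ℝ => H (q.1, q.1 * q.2)) q := by
  have hm : DifferentiableAt ℝ (fun q : ℝ × ℝ => (q.1, q.1 * q.2)) q := by fun_prop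
  exact DifferentiableAt.comp q (g := H) h.differentiableAt hm

lemma fderiv_apply_fst {H : ℝ × ℝ → ℝ} {q : ℝ × ℝ} {d : ℝ} (h : DifferentiableAt ℝ H q)
    (hd : HasDerivAt (fun x => H (x, q.2)) d q.1) : fderiv ℝ H q (1, 0) = d := by
  have := h.hasFDerivAt.comp_hasDerivAt q.1
    ((hasDerivAt_id q.1).prodMk (hasDerivAt_const q.1 q.2))
  exact this.unique hd

lemma fderiv_apply_snd {H : ℝ × ℝ → ℝ} {q : ℝ × ℝ} {d : ℝ} (h : DifferentiableAt ℝ H q)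
    (hd : HasDerivAt (fun t => H (q.1, t)) d q.2) : fderiv ℝ H q (0, 1) = d := by
  have := h.hasFDerivAt.comp_hasDerivAt q.2
    ((hasDerivAt_const q.2 q.1).prodMk (hasDerivAt_id q.2))
  exact this.unique hd

/-- The energy inequality on the triangle `0 ≤ s ≤ r ≤ X`. The hypothesis `hdiag` says that there
is no flux through the diagonal. -/
lemma energy_nonpos {A A' : ℝ → ℝ} {P S a b c : ℝ × ℝ → ℝ}
    (hA0 : A 0 = 0)
    (hApos : ∀ r : ℝ, 0 < r → 0 < A r)
    (hA'nonneg : ∀ r : ℝ, 0 ≤ r → 0 ≤ A' r)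
    (hAderiv : ∀ r : ℝ, 0 ≤ r → HasDerivWithinAt A (A' r) (Ici 0) r)
    (hA'cont : ContinuousOn A' (Ici 0))
    (hP : ContinuousOn P (Ici 0 ×ˢ Ici 0)) (hS : ContinuousOn S (Ici 0 ×ˢ Ici 0))
    (hP' : ∀ r s : ℝ, 0 < r → 0 < s → HasFDerivAt P (a (r, s) • ContinuousLinearMap.fst ℝ ℝ ℝ
          + b (r, s) • ContinuousLinearMap.snd ℝ ℝ ℝ) (r, s))
    (hS' : ∀ r s : ℝ, 0 < r → 0 < s → HasFDerivAt S (b (r, s) • ContinuousLinearMap.fst ℝ ℝ ℝ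
          + c (r, s) • ContinuousLinearMap.snd ℝ ℝ ℝ) (r, s))
    (hpde : ∀ r s : ℝ, 0 < r → 0 < s →
      a (r, s) + A' r / A r * P (r, s) = c (r, s) + A' s / A s * S (r, s))
    (hdiag : ∀ x : ℝ, 0 ≤ x → A x * (P (x, x) + S (x, x)) ^ 2 = 0) {X : ℝ} (hX : 0 < X) :
    ∫ t in (0 : ℝ)..1, X * ((P (X, X * t) ^ 2 + S (X, X * t) ^ 2) * A (X * t)) ≤ 0 := by
  have hAc : ContinuousOn A (Ici 0) := fun r hr => (hAderiv r hr).continuousWithinAt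
  have hAat : ∀ r, 0 < r → HasDerivAt A (A' r) r := fun r hr =>
    (hAderiv r hr.le).hasDerivAt (Ici_mem_nhds hr)
  have hAmono : MonotoneOn A (Ici 0) := by
    refine monotoneOn_of_deriv_nonneg (convex_Ici 0) hAc ?_ ?_
    · intro r hr
      rw [interior_Ici] at hr
      exact (hAat r hr).differentiableAt.differentiableWithinAt
    · intro r hr
      rw [interior_Ici] at hr
      rw [(hAat r hr).deriv]
      exact hA'nonneg r (le_of_lt hr)
  -- The pulled-back field `(x e, -(t e + p))` and its divergence `h`.
  let f : ℝ × ℝ → ℝ := fun q =>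
    q.1 * ((P (q.1, q.1 * q.2) ^ 2 + S (q.1, q.1 * q.2) ^ 2) * A (q.1 * q.2))
  let g : ℝ × ℝ → ℝ := fun q =>
    -(q.2 * ((P (q.1, q.1 * q.2) ^ 2 + S (q.1, q.1 * q.2) ^ 2) * A (q.1 * q.2))
      + 2 * A (q.1 * q.2) * S (q.1, q.1 * q.2) * P (q.1, q.1 * q.2))
  let h : ℝ × ℝ → ℝ := fun q =>
    -(2 * q.1 * A' q.1 * P (q.1, q.1 * q.2) ^ 2 * (A (q.1 * q.2) / A q.1))
  have hm : Continuous (fun q : ℝ × ℝ => (q.1, q.1 * q.2)) := by fun_prop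
  have hmaps : MapsTo (fun q : ℝ × ℝ => (q.1, q.1 * q.2)) (Icc (0, 0) (X, 1)) (Ici 0 ×ˢ Ici 0) :=
    fun q hq => ⟨hq.1.1, mul_nonneg hq.1.1 hq.1.2⟩
  have cP : ContinuousOn (fun q : ℝ × ℝ => P (q.1, q.1 * q.2)) (Icc (0, 0) (X, 1)) :=
    hP.comp hm.continuousOn hmaps
  have cS : ContinuousOn (fun q : ℝ × ℝ => S (q.1, q.1 * q.2)) (Icc (0, 0) (X, 1)) :=
    hS.comp hm.continuousOn hmaps
  have cA : ContinuousOn (fun q : ℝ × ℝ => A (q.1 * q.2)) (Icc (0, 0) (X, 1)) :=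
    hAc.comp (f := fun q : ℝ × ℝ => q.1 * q.2) (by fun_prop) fun q hq => (hmaps hq).2
  have cA1 : ContinuousOn (fun q : ℝ × ℝ => A q.1) (Icc (0, 0) (X, 1)) :=
    hAc.comp continuousOn_fst fun q hq => (hmaps hq).1
  have cA' : ContinuousOn (fun q : ℝ × ℝ => A' q.1) (Icc (0, 0) (X, 1)) :=
    hA'cont.comp continuousOn_fst fun q hq => (hmaps hq).1
  have cf : ContinuousOn f (Icc (0, 0) (X, 1)) :=
    continuousOn_fst.mul (((cP.pow 2).add (cS.pow 2)).mul cA)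
  have cg : ContinuousOn g (Icc (0, 0) (X, 1)) :=
    ((continuousOn_snd.mul (((cP.pow 2).add (cS.pow 2)).mul cA)).add
      (((continuousOn_const.mul cA).mul cS).mul cP)).neg
  have hpos : ∀ q ∈ Ioo (0 : ℝ) X ×ˢ Ioo (0 : ℝ) 1, 0 < q.1 ∧ 0 < q.1 * q.2 := fun q hq =>
    ⟨hq.1.1, mul_pos hq.1.1 hq.2.1⟩
  have dP : ∀ q ∈ Ioo (0 : ℝ) X ×ˢ Ioo (0 : ℝ) 1,
      DifferentiableAt ℝ (fun q : ℝ × ℝ => P (q.1, q.1 * q.2)) q := fun q hq =>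
    differentiableAt_triangle (hP' _ _ (hpos q hq).1 (hpos q hq).2)
  have dS : ∀ q ∈ Ioo (0 : ℝ) X ×ˢ Ioo (0 : ℝ) 1,
      DifferentiableAt ℝ (fun q : ℝ × ℝ => S (q.1, q.1 * q.2)) q := fun q hq =>
    differentiableAt_triangle (hS' _ _ (hpos q hq).1 (hpos q hq).2)
  have dA : ∀ q ∈ Ioo (0 : ℝ) X ×ˢ Ioo (0 : ℝ) 1,
      DifferentiableAt ℝ (fun q : ℝ × ℝ => A (q.1 * q.2)) q := fun q hq =>
    DifferentiableAt.comp q (g := A) (f := fun q : ℝ × ℝ => q.1 * q.2)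
      (hAat _ (hpos q hq).2).differentiableAt (by fun_prop)
  have df : ∀ q ∈ Ioo (0 : ℝ) X ×ˢ Ioo (0 : ℝ) 1, DifferentiableAt ℝ f q := fun q hq =>
    differentiableAt_fst.mul ((((dP q hq).pow 2).add ((dS q hq).pow 2)).mul (dA q hq))
  have dg : ∀ q ∈ Ioo (0 : ℝ) X ×ˢ Ioo (0 : ℝ) 1, DifferentiableAt ℝ g q := fun q hq =>
    ((differentiableAt_snd.mul ((((dP q hq).pow 2).add ((dS q hq).pow 2)).mul (dA q hq))).add
      ((((dA q hq).const_mul 2).mul (dS q hq)).mul (dP q hq))).neg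
  have hdiv : ∀ q ∈ Ioo (0 : ℝ) X ×ˢ Ioo (0 : ℝ) 1,
      fderiv ℝ f q (1, 0) + fderiv ℝ g q (0, 1) = h q := by
    rintro ⟨x, t⟩ hq
    obtain ⟨hx, hxt⟩ := hpos _ hq
    have hP1 := hasDerivAt_triangle_fst (hP' _ _ hx hxt)
    have hP2 := hasDerivAt_triangle_snd (hP' _ _ hx hxt)
    have hS1 := hasDerivAt_triangle_fst (hS' _ _ hx hxt)
    have hS2 := hasDerivAt_triangle_snd (hS' _ _ hx hxt)
    have hA1 : HasDerivAt (fun x => A (x * t)) (A' (x * t) * t) x :=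
      ((hAat _ hxt).comp x ((hasDerivAt_id' x).mul_const t)).congr_deriv (by simp)
    have hA2 : HasDerivAt (fun t => A (x * t)) (A' (x * t) * x) t :=
      ((hAat _ hxt).comp t ((hasDerivAt_id' t).const_mul x)).congr_deriv (by simp)
    rw [fderiv_apply_fst (df _ hq) ((hasDerivAt_id x).mul (((hP1.pow 2).add (hS1.pow 2)).mul hA1)),
      fderiv_apply_snd (dg _ hq) (((hasDerivAt_id t).mul (((hP2.pow 2).add (hS2.pow 2)).mul hA2)).add
        (((hA2.const_mul 2).mul hS2).mul hP2)).neg]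
    have hAx := (hApos x hx).ne'
    have hAs := (hApos _ hxt).ne'
    have key := hpde x (x * t) hx hxt
    simp only [h, id, Pi.add_apply, Pi.pow_apply, Pi.mul_apply]
    have key' : a (x, x * t) = c (x, x * t) + A' (x * t) / A (x * t) * S (x, x * t)
        - A' x / A x * P (x, x * t) := by linarith
    rw [key']
    simp only [Nat.cast_ofNat]
    field_simp
    ring
  have hres : (volume.restrict (Icc ((0 : ℝ), (0 : ℝ)) (X, 1)) : Measure (ℝ × ℝ))
      = volume.restrict (Ioo (0 : ℝ) X ×ˢ Ioo (0 : ℝ) 1) := by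
    rw [Icc_prod_eq]
    exact (Measure.restrict_congr_set (Measure.set_prod_ae_eq Ioo_ae_eq_Icc Ioo_ae_eq_Icc)).symm
  have hsub : Ioo (0 : ℝ) X ×ˢ Ioo (0 : ℝ) 1 ⊆ Icc (0, 0) (X, 1) := fun q hq =>
    ⟨⟨hq.1.1.le, hq.2.1.le⟩, ⟨hq.1.2.le, hq.2.2.le⟩⟩
  have hmeas : MeasurableSet (Ioo (0 : ℝ) X ×ˢ Ioo (0 : ℝ) 1) :=
    measurableSet_Ioo.prod measurableSet_Ioo
  -- The ratio `A (x t) / A x` is undefined at `x = 0`, but it is bounded by `1` since `A` is monotone.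
  have hint : IntegrableOn h (Ioo (0 : ℝ) X ×ˢ Ioo (0 : ℝ) 1) := by
    have cB : ContinuousOn (fun q : ℝ × ℝ => 2 * q.1 * A' q.1 * P (q.1, q.1 * q.2) ^ 2)
        (Icc (0, 0) (X, 1)) :=
      ((continuousOn_const.mul continuousOn_fst).mul cA').mul (cP.pow 2)
    have iB := (cB.integrableOn_compact (μ := volume) isCompact_Icc).mono_set hsub
    have cR : ContinuousOn (fun q : ℝ × ℝ => A (q.1 * q.2) / A q.1)
        (Ioo (0 : ℝ) X ×ˢ Ioo (0 : ℝ) 1) :=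
      (cA.mono hsub).div (cA1.mono hsub) fun q hq => (hApos _ hq.1.1).ne'
    have ch : ContinuousOn h (Ioo (0 : ℝ) X ×ˢ Ioo (0 : ℝ) 1) := ((cB.mono hsub).mul cR).neg
    refine Integrable.mono iB (ch.aestronglyMeasurable hmeas) ?_
    refine (ae_restrict_iff' hmeas).2 (Eventually.of_forall fun q hq => ?_)
    have hle : |A (q.1 * q.2) / A q.1| ≤ 1 := by
      have h1 := hApos _ (hpos q hq).1
      have h2 := hApos _ (hpos q hq).2
      rw [abs_of_pos (div_pos h2 h1), div_le_one h1]
      exact hAmono (hpos q hq).2.le (hpos q hq).1.le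
        (mul_le_of_le_one_right hq.1.1.le hq.2.2.le)
    simp only [h, Real.norm_eq_abs, abs_neg]
    rw [abs_mul _ (A (q.1 * q.2) / A q.1)]
    exact mul_le_of_le_one_right (abs_nonneg _) hle
  have hstokes := integral_divergence_prod_Icc_of_hasFDerivAt_of_le f g (fderiv ℝ f) (fderiv ℝ g)
    (0, 0) (X, 1) ⟨hX.le, zero_le_one⟩ cf cg (fun q hq => (df q hq).hasFDerivAt)
    (fun q hq => (dg q hq).hasFDerivAt) (by
      rw [IntegrableOn, hres]
      exact hint.congr_fun (fun q hq => (hdiv q hq).symm) hmeas)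
  rw [hres, setIntegral_congr_fun hmeas hdiv] at hstokes
  have hle : ∫ q in Ioo (0 : ℝ) X ×ˢ Ioo (0 : ℝ) 1, h q ≤ 0 := by
    refine setIntegral_nonpos hmeas fun q hq => neg_nonpos.2 ?_
    have h1 := hApos _ (hpos q hq).1
    have h2 := hApos _ (hpos q hq).2
    have h3 := hA'nonneg q.1 hq.1.1.le
    have h4 := hq.1.1
    positivity
  have hg1 : ∫ x in (0 : ℝ)..X, g (x, 1) = 0 := by
    rw [intervalIntegral.integral_congr (g := fun _ => 0)]
    · simp
    · intro x hx
      rw [uIcc_of_le hX.le] at hx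
      simp only [g, mul_one]
      linear_combination -hdiag x hx.1
  have hg0 : ∫ x in (0 : ℝ)..X, g (x, 0) = 0 := by simp [g, hA0]
  have hf0 : ∫ t in (0 : ℝ)..1, f (0, t) = 0 := by simp [f]
  have hfX : ∫ t in (0 : ℝ)..1, f (X, t)
      = ∫ t in (0 : ℝ)..1, X * ((P (X, X * t) ^ 2 + S (X, X * t) ^ 2) * A (X * t)) := rfl
  rw [← hfX]
  simp only [hg1, hg0, hf0] at hstokes
  linarith


/-- The energy/Stokes argument lemma. If `A` is `C¹` on `[0,∞)` with
`A 0 = 0`, `A > 0` on `(0,∞)`, `A' ≥ 0` on `[0,∞)`, and `F` is `C²` on the closed quadrant,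
antisymmetric, and satisfies the PDE
`∂²F/∂r² + (A'/A)·∂F/∂r = ∂²F/∂s² + (A'/A)·∂F/∂s` on the open quadrant,
then `F` vanishes on the closed quadrant. -/
theorem stmt0 (A A' : ℝ → ℝ)
    (hA0 : A 0 = 0)
    (hApos : ∀ r : ℝ, 0 < r → 0 < A r)
    (hA'nonneg : ∀ r : ℝ, 0 ≤ r → 0 ≤ A' r)
    (hAderiv : ∀ r : ℝ, 0 ≤ r → HasDerivWithinAt A (A' r) (Set.Ici 0) r)
    (hA'cont : ContinuousOn A' (Set.Ici 0))
    (F : ℝ × ℝ → ℝ)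
    (hF : ContDiffOn ℝ 2 F (Set.Ici 0 ×ˢ Set.Ici 0))
    (hanti : ∀ r : ℝ, 0 ≤ r → ∀ s : ℝ, 0 ≤ s → F (r, s) = - F (s, r))
    (hPDE : ∀ r : ℝ, 0 < r → ∀ s : ℝ, 0 < s →
      deriv (deriv (fun x => F (x, s))) r + (A' r / A r) * deriv (fun x => F (x, s)) r
        = deriv (deriv (fun y => F (r, y))) s + (A' s / A s) * deriv (fun y => F (r, y)) s) :
    ∀ r : ℝ, 0 ≤ r → ∀ s : ℝ, 0 ≤ s → F (r, s) = 0 := by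
  obtain ⟨P, S, a, b, c, hP, hS, hD⟩ := exists_partials hF
  have hzero : ∀ x : ℝ, 0 ≤ x → F (x, x) = 0 := fun x hx => by linarith [hanti x hx x hx]
  have hFr : ∀ r s : ℝ, 0 < r → 0 < s → HasDerivAt (fun x => F (x, s)) (P (r, s)) r :=
    fun r s hr hs =>
      (hasDerivAt_comp_pair (hasDerivAt_id' r) (hasDerivAt_const r s)
        (hD r s hr hs).1).congr_deriv (by simp)
  have hFs : ∀ r s : ℝ, 0 < r → 0 < s → HasDerivAt (fun y => F (r, y)) (S (r, s)) s :=
    fun r s hr hs =>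
      (hasDerivAt_comp_pair (hasDerivAt_const s r) (hasDerivAt_id' s)
        (hD r s hr hs).1).congr_deriv (by simp)
  have hpde : ∀ r s : ℝ, 0 < r → 0 < s →
      a (r, s) + A' r / A r * P (r, s) = c (r, s) + A' s / A s * S (r, s) := by
    intro r s hr hs
    have h1 : HasDerivAt (deriv fun x => F (x, s)) (a (r, s)) r := by
      have : HasDerivAt (fun x => P (x, s)) (a (r, s)) r :=
        (hasDerivAt_comp_pair (hasDerivAt_id' r) (hasDerivAt_const r s)
          (hD r s hr hs).2.1).congr_deriv (by simp)
      refine this.congr_of_eventuallyEq ?_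
      filter_upwards [Ioi_mem_nhds hr] with x hx
      exact (hFr x s hx hs).deriv
    have h2 : HasDerivAt (deriv fun y => F (r, y)) (c (r, s)) s := by
      have : HasDerivAt (fun y => S (r, y)) (c (r, s)) s :=
        (hasDerivAt_comp_pair (hasDerivAt_const s r) (hasDerivAt_id' s)
          (hD r s hr hs).2.2).congr_deriv (by simp)
      refine this.congr_of_eventuallyEq ?_
      filter_upwards [Ioi_mem_nhds hs] with y hy
      exact (hFs r y hr hy).deriv
    have := hPDE r hr s hs
    rwa [h1.deriv, h2.deriv, (hFr r s hr hs).deriv, (hFs r s hr hs).deriv] at this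
  have hdiag : ∀ x : ℝ, 0 ≤ x → A x * (P (x, x) + S (x, x)) ^ 2 = 0 := by
    intro x hx
    rcases hx.eq_or_lt with rfl | hx
    · simp [hA0]
      -- `P + S` is the derivative of `F` along the diagonal, where `F` vanishes.
    · have h1 : HasDerivAt (fun y => F (y, y)) (P (x, x) + S (x, x)) x :=
        (hasDerivAt_comp_pair (hasDerivAt_id' x) (hasDerivAt_id' x)
          (hD x x hx hx).1).congr_deriv (by simp)
      have h2 : HasDerivAt (fun y => F (y, y)) 0 x := by
        refine (hasDerivAt_const x (0 : ℝ)).congr_of_eventuallyEq ?_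
        filter_upwards [Ioi_mem_nhds hx] with y hy
        exact hzero y (le_of_lt hy)
      rw [h1.unique h2]
      simp
  have hS0 : ∀ X s : ℝ, 0 < s → s < X → S (X, s) = 0 := by
    intro X s hs hsX
    have hX : 0 < X := hs.trans hsX
    have hle := energy_nonpos hA0 hApos hA'nonneg hAderiv hA'cont hP hS
      (fun r s hr hs => (hD r s hr hs).2.1) (fun r s hr hs => (hD r s hr hs).2.2) hpde hdiag hX
    by_contra hne
    refine absurd hle (not_le.2 (intervalIntegral.integral_pos one_pos ?_ ?_ ?_))
    · have hmaps : MapsTo (fun t : ℝ => (X, X * t)) (Icc 0 1) (Ici 0 ×ˢ Ici 0) := fun t ht =>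
        ⟨hX.le, mul_nonneg hX.le ht.1⟩
      have hm : Continuous (fun t : ℝ => (X, X * t)) := by fun_prop
      have cP := hP.comp hm.continuousOn hmaps
      have cS := hS.comp hm.continuousOn hmaps
      have hAc : ContinuousOn A (Ici 0) := fun r hr => (hAderiv r hr).continuousWithinAt
      have cA := hAc.comp (f := fun t : ℝ => X * t) (s := Icc 0 1) (by fun_prop)
        fun t ht => (hmaps ht).2
      exact continuousOn_const.mul (((cP.pow 2).add (cS.pow 2)).mul cA)
    · intro t ht
      have := hApos (X * t) (mul_pos hX ht.1)
      positivity
    · refine ⟨s / X, ⟨by positivity, (div_le_one hX).2 hsX.le⟩, ?_⟩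
      rw [mul_div_cancel₀ s hX.ne']
      have := hApos s hs
      positivity
  have hlower : ∀ X s : ℝ, 0 ≤ s → s < X → F (X, s) = 0 := by
    intro X s hs hsX
    have hX : 0 < X := hs.trans_lt hsX
    have hcont : ContinuousOn (fun y => F (X, y)) (Icc s X) :=
      hF.continuousOn.comp (f := fun y : ℝ => (X, y)) (by fun_prop)
        fun y hy => ⟨hX.le, hs.trans hy.1⟩
    obtain ⟨y, hy, hy'⟩ := exists_hasDerivAt_eq_slope (fun y => F (X, y)) (fun y => S (X, y)) hsX
      hcont fun y hy => hFs X y hX (hs.trans_lt hy.1)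
    rw [hS0 X y (hs.trans_lt hy.1) hy.2, hzero X hX.le, eq_comm, div_eq_zero_iff] at hy'
    rcases hy' with h | h <;> linarith
  intro r hr s hs
  rcases lt_trichotomy r s with h | rfl | h
  · rw [hanti r hr s hs, hlower s r hr h, neg_zero]
  · exact hzero r hr
  · exact hlower r s hs h
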